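/- Let u₀ be the bilateral shift on ℓ²(ℤ) and p the projection onto span{e_i : i ≥ 0}. For m, n ∈ ℤ with m ≠ n, there is no invertible operator y with yp = py and no compact k with 1 + k invertible such that u₀^m = (1+k) y u₀^n; i.e., if u₀^m = (1+k) y u₀^n with k compact, 1+k invertible, and y invertible commuting with p, then m = n. -/

import Mathlib

noncomputable section

/-- `H` is `ℓ²(ℤ)`. -/
abbrev HZ : Type := lp (fun _ : ℤ => ℂ) 2

/-- The standard orthonormal basis vectors `e i` of `ℓ²(ℤ)`. -/
noncomputable def e (i : ℤ) : HZ := lp.single 2 i (1 : ℂ)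

/-!
Let `W = range p`. The shift maps `W` strictly into itself, so `N ↦ u₀ ^ N • W` is strictly
antitone, whereas `y • W = W`. Hence `(1 + k) • W = u₀ ^ (m - n) • W` is comparable with `W`. If it
is contained in `W`, then `k` restricts to a compact operator of `W`, and the Fredholm alternative
turns injectivity of `1 + k` on `W` into surjectivity, so `(1 + k) • W = W`. If it contains `W`, the
same argument applies to `(1 + k)⁻¹`, again a compact perturbation of the identity. Strictness then
forces `m - n = 0`.
-/

section Pointwise

open scoped Pointwise

theorem strictAnti_zpow_smul {M α : Type*} [Monoid M] [PartialOrder α] [MulAction M α]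
    [CovariantClass M α HSMul.hSMul LE.le] {g : Mˣ} {a : α} (h : g • a < a) :
    StrictAnti fun N : ℤ ↦ g ^ N • a := by
  refine strictAnti_int_of_succ_lt fun N ↦ ?_
  have hmono : StrictMono fun b : α ↦ g ^ N • b :=
    (smul_mono_right (g ^ N).val).strictMono_of_injective (MulAction.injective (g ^ N))
  simpa only [zpow_add_one, mul_smul] using hmono h

section Compact

variable {𝕜 X : Type*} [NontriviallyNormedField 𝕜] [NormedAddCommGroup X] [NormedSpace 𝕜 X]

theorem surjective_one_add_of_isCompactOperator [CompleteSpace X] {T : X →L[𝕜] X}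
    (hT : IsCompactOperator T) (hinj : Function.Injective (1 + T : X →L[𝕜] X)) :
    Function.Surjective (1 + T : X →L[𝕜] X) := by
  rcases hT.hasEigenvalue_or_mem_resolventSet (neg_ne_zero.2 (one_ne_zero (α := 𝕜))) with h | h
  · obtain ⟨v, hv⟩ := h.exists_hasEigenvector
    have hTv : T v = -v := by simpa using hv.apply_eq_smul
    exact absurd (hinj (by simp [hTv])) hv.2
  · have hunit : IsUnit (1 + T) := by
      rw [← IsUnit.neg_iff, neg_add']
      simpa [spectrum.mem_resolventSet_iff] using h
    exact (ContinuousLinearMap.isUnit_iff_bijective.1 hunit).2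

theorem isCompactOperator_inv_sub_one {c : (X →L[𝕜] X)ˣ}
    (hc : IsCompactOperator (c.val - 1 : X →L[𝕜] X)) :
    IsCompactOperator (c⁻¹.val - 1 : X →L[𝕜] X) := by
  have hinv : c⁻¹.val - 1 = -c⁻¹.val * (c.val - 1) := by
    rw [mul_sub, neg_mul, Units.inv_mul, mul_one, neg_sub_neg]
  rw [hinv]
  exact hc.clm_comp (-c⁻¹.val)

variable [CompleteSpace X] {W : Submodule 𝕜 X}

theorem smul_eq_of_smul_le_of_isCompactOperator_sub_one {c : X →L[𝕜] X}
    (hW : IsClosed (W : Set X)) (hc : IsCompactOperator (c - 1 : X →L[𝕜] X))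
    (hinj : Set.InjOn c W) (hcW : c • W ≤ W) : c • W = W := by
  have : CompleteSpace W := hW.completeSpace_coe
  have hmaps : ∀ w ∈ W, (c - 1) w ∈ W := fun w hw ↦
    W.sub_mem (hcW (Submodule.smul_mem_pointwise_smul w c W hw)) hw
  let T : W →L[𝕜] W := (c - 1).restrict hmaps
  have hT : IsCompactOperator T := hc.restrict hmaps hW
  have hcoe (w : W) : ((1 + T) w : X) = c w := add_sub_cancel (w : X) (c w)
  have hinjT : Function.Injective (1 + T : W →L[𝕜] W) := fun v w hvw ↦
    Subtype.ext (hinj v.2 w.2 (by rw [← hcoe, hvw, hcoe]))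
  refine hcW.antisymm fun w hw ↦ ?_
  obtain ⟨v, hv⟩ := surjective_one_add_of_isCompactOperator hT hinjT ⟨w, hw⟩
  exact ⟨v, v.2, (hcoe v).symm.trans (congrArg Subtype.val hv)⟩

theorem smul_eq_of_le_smul_of_isCompactOperator_sub_one {c : (X →L[𝕜] X)ˣ}
    (hW : IsClosed (W : Set X)) (hc : IsCompactOperator (c.val - 1 : X →L[𝕜] X))
    (hcW : W ≤ c • W) : c • W = W := by
  have hle : c⁻¹ • W ≤ W :=
    (smul_mono_right c⁻¹.val hcW).trans_eq (inv_smul_smul c W)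
  have heq : c⁻¹ • W = W :=
    smul_eq_of_smul_le_of_isCompactOperator_sub_one hW (isCompactOperator_inv_sub_one hc)
      (MulAction.injective c⁻¹).injOn hle
  exact (inv_smul_eq_iff.1 heq).symm

theorem stmt19_general (hW : IsClosed (W : Set X)) {U c y : (X →L[𝕜] X)ˣ}
    (hU : U • W < W) (hy : y • W = W) (hc : IsCompactOperator (c.val - 1 : X →L[𝕜] X))
    {m n : ℤ} (heq : U ^ m = c * y * U ^ n) : m = n := by
  have hanti : StrictAnti fun N : ℤ ↦ U ^ N • W := strictAnti_zpow_smul hU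
  have hc_smul : c • W = U ^ (m - n) • W := by
    rw [zpow_sub, heq, mul_inv_cancel_right, mul_smul, hy]
  have hc_fix : c • W = W := by
    rcases le_total 0 (m - n) with h | h
    · refine smul_eq_of_smul_le_of_isCompactOperator_sub_one hW hc
        (MulAction.injective c).injOn (show c • W ≤ W from ?_)
      simpa [hc_smul] using hanti.antitone h
    · refine smul_eq_of_le_smul_of_isCompactOperator_sub_one hW hc ?_
      simpa [hc_smul] using hanti.antitone h
  exact sub_eq_zero.1 (hanti.injective (by simp [← hc_smul, hc_fix]))

end Compact

section Range

variable {R X : Type*} [Ring R] [TopologicalSpace X] [AddCommGroup X] [Module R X]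
  {p : X →L[R] X}

theorem smul_range_eq_of_commute [IsTopologicalAddGroup X] (hidem : IsIdempotentElem p)
    {y : (X →L[R] X)ˣ} (hyp : Commute y.val p) : y • p.range = p.range :=
  ((ContinuousLinearMap.IsIdempotentElem.commute_iff_of_isUnit y.isUnit hidem).1 hyp.symm).1

theorem smul_range_lt_range_of_shift [T2Space X] [ContinuousAdd X] (hidem : IsIdempotentElem p)
    {b : ℤ → X} (hb : Dense (Submodule.span R (Set.range b) : Set X)) (hb_ne : b (-1) ≠ 0)
    (hp : ∀ i, p (b i) = if 0 ≤ i then b i else 0)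
    {U : (X →L[R] X)ˣ} (hU : ∀ i, U.val (b i) = b (i + 1)) :
    U • p.range < p.range := by
  have hpUp : p * U.val * p = U.val * p := by
    refine ContinuousLinearMap.ext_on hb ?_
    rintro _ ⟨i, rfl⟩
    by_cases hi : 0 ≤ i
    · simp [hp, hU, hi, hi.trans (Int.le_add_one le_rfl)]
    · simp [hp, hi]
  refine lt_of_le_of_ne ?_ fun hUW ↦ hb_ne ?_
  · rintro _ ⟨_, ⟨x, rfl⟩, rfl⟩
    exact ⟨U.val (p x), DFunLike.congr_fun hpUp x⟩
  · have hb_zero : b 0 ∈ U • p.range := hUW.symm ▸ ⟨b 0, by simp [hp]⟩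
    obtain ⟨_, ⟨x, rfl⟩, hx⟩ := hb_zero
    have hpx : p x = b (-1) := smul_left_cancel U (hx.trans (by simpa using! (hU (-1)).symm))
    calc b (-1) = p (p x) := by rw [← hpx]; exact (DFunLike.congr_fun hidem x).symm
      _ = 0 := by rw [hpx, hp, if_neg (by decide)]

end Range

end Pointwise

theorem e_ne_zero (i : ℤ) : e i ≠ 0 := by
  intro h
  simpa [e] using congrArg (fun f : HZ ↦ f i) h

theorem dense_span_range_e : Dense (Submodule.span ℂ (Set.range e) : Set HZ) := by
  let b : HilbertBasis ℤ ℂ HZ := .ofRepr (.refl ℂ HZ)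
  have hb : ⇑b = e := funext fun i ↦ (b.repr_symm_single i).symm
  rw [Submodule.dense_iff_topologicalClosure_eq_top, ← hb, b.dense_span]

/-- Let `u₀` be the bilateral shift on `ℓ²(ℤ)` (a unitary with `u₀ (e i) = e (i+1)`)
and `p` the orthogonal projection onto the closed span of `{e i : i ≥ 0}`.  If
`u₀^m = (1 + k) y u₀^n` with `k` compact, `1 + k` invertible, and `y` invertible
commuting with `p`, then `m = n`. -/
theorem stmt19 (U : unitary (HZ →L[ℂ] HZ))
    (hu : ∀ i : ℤ, (U : HZ →L[ℂ] HZ) (e i) = e (i + 1))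
    (p : HZ →L[ℂ] HZ)
    (hp : ∀ i : ℤ, p (e i) = if 0 ≤ i then e i else 0)
    (hidem : IsIdempotentElem p) (hsa : IsSelfAdjoint p)
    (m n : ℤ) (k y : HZ →L[ℂ] HZ)
    (hk : IsCompactOperator ⇑k) (hk1 : IsUnit (1 + k))
    (hy : IsUnit y) (hyp : y * p = p * y)
    (heq : (↑(U ^ m) : HZ →L[ℂ] HZ) = (1 + k) * y * (↑(U ^ n) : HZ →L[ℂ] HZ)) :
    m = n :=
  stmt19_general (U := Unitary.toUnits U) (y := hy.unit) (c := hk1.unit)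
    (ContinuousLinearMap.IsIdempotentElem.isClosed_range hidem)
    (smul_range_lt_range_of_shift hidem dense_span_range_e (e_ne_zero _) hp hu)
    (smul_range_eq_of_commute hidem hyp) (by simpa) (Units.ext (by simpa [← map_zpow]))
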